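/- arXiv:2307.06210 — 2 statements merged into one kernel-verified Lean document; each statement's English description precedes it below -/
import Mathlib

section
/- For every incentive compatible correlated mechanism (μ, γ, π), the point defined by x_i[b,s,θ] := μ[b]·γ_i[b,s,θ], y[b,s,a] := μ[b]·π[b,s,a], and z_i[b_i,b'_i,s_i] := max_{s'_i ∈ S_i} f_i(x_i|b_i,b'_i,s_i,s'_i,P) is a feasible solution of LP(P, C, 0), and its objective value equals U(μ,γ,π). -/
open Finset

noncomputable section

variable {n : ℕ} {B S : Fin n → Type*} {Θ A : Type*}

/-- Expected payment of agent `i` under truthful behavior. -/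
def Fpay [∀ i, Fintype (B i)] [∀ i, Fintype (S i)] [Fintype Θ]
    (P : (∀ i, B i) → (∀ i, S i) → Θ → ℝ) (μ : (∀ i, B i) → ℝ)
    (γ : Fin n → (∀ i, B i) → (∀ i, S i) → Θ → ℝ) (i : Fin n) : ℝ :=
  ∑ b, ∑ s, ∑ θ, μ b * P b s θ * γ i b s θ

/-- Expected payment of agent `i` deviating via `(φ, ψ)` while the others are truthful. -/
def FpayDev [∀ i, Fintype (B i)] [∀ i, Fintype (S i)] [Fintype Θ]
    (P : (∀ i, B i) → (∀ i, S i) → Θ → ℝ) (μ : (∀ i, B i) → ℝ)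
    (γ : Fin n → (∀ i, B i) → (∀ i, S i) → Θ → ℝ) (i : Fin n)
    (φ : B i → B i) (ψ : B i → S i → S i) : ℝ :=
  ∑ b, ∑ s, ∑ θ, μ b * P (Function.update b i (φ (b i))) s θ *
      γ i b (Function.update s i (ψ (b i) (s i))) θ

/-- Incentive compatibility of a correlated mechanism. -/
def IC [∀ i, Fintype (B i)] [∀ i, Fintype (S i)] [Fintype Θ]
    (c : ∀ i, B i → ℝ) (P : (∀ i, B i) → (∀ i, S i) → Θ → ℝ)
    (μ : (∀ i, B i) → ℝ)
    (γ : Fin n → (∀ i, B i) → (∀ i, S i) → Θ → ℝ) : Prop :=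
  ∀ (i : Fin n) (φ : B i → B i) (ψ : B i → S i → S i),
    Fpay P μ γ i - FpayDev P μ γ i φ ψ ≥ ∑ b, μ b * (c i (b i) - c i (φ (b i)))

/-- Principal's expected utility of a correlated mechanism. -/
def Util [∀ i, Fintype (B i)] [∀ i, Fintype (S i)] [Fintype Θ] [Fintype A]
    (P : (∀ i, B i) → (∀ i, S i) → Θ → ℝ) (u : A → Θ → ℝ)
    (μ : (∀ i, B i) → ℝ)
    (γ : Fin n → (∀ i, B i) → (∀ i, S i) → Θ → ℝ)
    (π : (∀ i, B i) → (∀ i, S i) → A → ℝ) : ℝ :=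
  (∑ b, ∑ s, ∑ θ, μ b * P b s θ * ∑ a, π b s a * u a θ) - ∑ i, Fpay P μ γ i

/-- Validity of a correlated mechanism (distributions and payment bounds). -/
def IsMech [∀ i, Fintype (B i)] [Fintype A] (M : ℝ)
    (μ : (∀ i, B i) → ℝ)
    (γ : Fin n → (∀ i, B i) → (∀ i, S i) → Θ → ℝ)
    (π : (∀ i, B i) → (∀ i, S i) → A → ℝ) : Prop :=
  (∀ b, 0 ≤ μ b) ∧ (∑ b, μ b) = 1 ∧
  (∀ i b s θ, γ i b s θ ∈ Set.Icc (0:ℝ) M) ∧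
  (∀ b s a, 0 ≤ π b s a) ∧ (∀ b s, ∑ a, π b s a = 1)

/-- `f_i(x_i | b_i, b'_i, s_i, s'_i, ζ)`. -/
def fLP [∀ i, Fintype (B i)] [∀ i, DecidableEq (B i)]
    [∀ i, Fintype (S i)] [∀ i, DecidableEq (S i)] [Fintype Θ]
    (i : Fin n) (x : (∀ j, B j) → (∀ j, S j) → Θ → ℝ)
    (bi bi' : B i) (si si' : S i)
    (ζ : (∀ j, B j) → (∀ j, S j) → Θ → ℝ) : ℝ :=
  ∑ b, ∑ s, ∑ θ,
    if b i = bi' ∧ s i = si then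
      x (Function.update b i bi) (Function.update s i si') θ * ζ b s θ
    else 0

/-- Feasibility for `LP(ζ, Λ, ε)`. -/
def LPfeasible [∀ i, Fintype (B i)] [∀ i, DecidableEq (B i)]
    [∀ i, Fintype (S i)] [∀ i, DecidableEq (S i)] [Fintype Θ] [Fintype A]
    (M : ℝ)
    (ζ : (∀ j, B j) → (∀ j, S j) → Θ → ℝ)
    (Λ : ∀ i, B i → B i → ℝ) (ε : ℝ)
    (x : Fin n → (∀ j, B j) → (∀ j, S j) → Θ → ℝ)
    (y : (∀ j, B j) → (∀ j, S j) → A → ℝ)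
    (z : ∀ i, B i → B i → S i → ℝ)
    (μ : (∀ j, B j) → ℝ) : Prop :=
  (∀ i b s θ, 0 ≤ x i b s θ) ∧
  (∀ b s a, 0 ≤ y b s a) ∧
  (∀ i (bi bi' : B i) si, 0 ≤ z i bi bi' si) ∧
  (∀ b, 0 ≤ μ b) ∧ (∑ b, μ b) = 1 ∧
  (∀ (i : Fin n) (bi bi' : B i),
    (∑ si, (fLP i (x i) bi bi si si ζ - z i bi bi' si)) ≥
      (∑ b, if b i = bi then μ b * Λ i bi bi' else 0) - ε) ∧
  (∀ (i : Fin n) (bi bi' : B i) (si si' : S i),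
    z i bi bi' si ≥ fLP i (x i) bi bi' si si' ζ) ∧
  (∀ b s, (∑ a, y b s a) = μ b) ∧
  (∀ i b s θ, x i b s θ ≤ M * μ b)

/-- Objective of `LP(ζ, Λ, ε)`. -/
def LPobj [∀ i, Fintype (B i)] [∀ i, Fintype (S i)] [Fintype Θ] [Fintype A]
    (u : A → Θ → ℝ)
    (ζ : (∀ j, B j) → (∀ j, S j) → Θ → ℝ)
    (x : Fin n → (∀ j, B j) → (∀ j, S j) → Θ → ℝ)
    (y : (∀ j, B j) → (∀ j, S j) → A → ℝ) : ℝ :=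
  ∑ b, ∑ s, ∑ θ,
    ((∑ a, y b s a * ζ b s θ * u a θ) - ∑ i, x i b s θ * ζ b s θ)

/-!
With payments weighted by `μ`, the expected payment of agent `i` under a deviation `(φ, ψ)` splits
over recommendations and observed signals as `∑ bi, ∑ si, f_i(x_i | bi, φ bi, si, ψ bi si)`. The
best reply to each signal `si`, after the recommendation `bi` and the action `bi'`, attains the
maximum defining `z_i[bi, bi', si]`. Incentive compatibility against the deviation that plays `bi'`
with these replies after `bi`, and is truthful after every other recommendation, is then
constraint (i) at `(bi, bi')`.
-/

/-- The LP variables `x` induced by a mechanism: the payments weighted by the probability of the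
recommended action profile. -/
def weightedPayment (μ : (∀ j, B j) → ℝ) (γ : Fin n → (∀ j, B j) → (∀ j, S j) → Θ → ℝ) :
    Fin n → (∀ j, B j) → (∀ j, S j) → Θ → ℝ :=
  fun i b s θ => μ b * γ i b s θ

/-- The LP variables `y` induced by a mechanism: the principal's mixed actions weighted by the
probability of the recommended action profile. -/
def weightedDecision (μ : (∀ j, B j) → ℝ) (π : (∀ j, B j) → (∀ j, S j) → A → ℝ) :
    (∀ j, B j) → (∀ j, S j) → A → ℝ :=
  fun b s a => μ b * π b s a

/-- The LP variables `z` at their least feasible value: the largest expected payment over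
the reports of agent `i`, on the event that `i` is recommended `bi`, plays `bi'` and observes `si`
(not normalized by the probability of that event). -/
def maxDeviationPayment [∀ i, Fintype (B i)] [∀ i, DecidableEq (B i)]
    [∀ i, Fintype (S i)] [∀ i, DecidableEq (S i)] [∀ i, Nonempty (S i)] [Fintype Θ]
    (ζ : (∀ j, B j) → (∀ j, S j) → Θ → ℝ)
    (x : Fin n → (∀ j, B j) → (∀ j, S j) → Θ → ℝ) (i : Fin n) (bi bi' : B i) (si : S i) : ℝ :=
  univ.sup' univ_nonempty fun si' => fLP i (x i) bi bi' si si' ζ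

theorem FpayDev_id [∀ i, Fintype (B i)] [∀ i, Fintype (S i)] [Fintype Θ]
    (P : (∀ j, B j) → (∀ j, S j) → Θ → ℝ) (μ : (∀ j, B j) → ℝ)
    (γ : Fin n → (∀ j, B j) → (∀ j, S j) → Θ → ℝ) (i : Fin n) :
    FpayDev P μ γ i id (fun _ => id) = Fpay P μ γ i := by
  simp only [FpayDev, Fpay, id, Function.update_eq_self]

theorem LPobj_weighted_eq_Util [∀ i, Fintype (B i)] [∀ i, Fintype (S i)] [Fintype Θ] [Fintype A]
    (P : (∀ j, B j) → (∀ j, S j) → Θ → ℝ) (u : A → Θ → ℝ) (μ : (∀ j, B j) → ℝ)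
    (γ : Fin n → (∀ j, B j) → (∀ j, S j) → Θ → ℝ) (π : (∀ j, B j) → (∀ j, S j) → A → ℝ) :
    LPobj u P (weightedPayment μ γ) (weightedDecision μ π) = Util P u μ γ π := by
  have decision_term (b s θ) : ∑ a, weightedDecision μ π b s a * P b s θ * u a θ =
      μ b * P b s θ * ∑ a, π b s a * u a θ := by
    simp only [weightedDecision, mul_sum]
    exact sum_congr rfl fun a _ => by ring
  have payment_term : ∑ b, ∑ s, ∑ θ, ∑ i, weightedPayment μ γ i b s θ * P b s θ =
      ∑ i, Fpay P μ γ i := by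
    simp only [Fpay, weightedPayment, sum_comm (s := (univ : Finset (Fin n))), mul_right_comm]
  simp only [LPobj, Util, sum_sub_distrib, decision_term, payment_term]

/-- Replacing the `i`-th coordinate is a bijection between the fibers of the `i`-th projection. -/
theorem sum_filter_update {ι N : Type*} {α : ι → Type*} [DecidableEq ι]
    [AddCommMonoid N] [Fintype (∀ j, α j)] (i : ι) [DecidableEq (α i)] (a a' : α i)
    (f : (∀ j, α j) → (∀ j, α j) → N) :
    ∑ b with b i = a', f (Function.update b i a) b =
      ∑ b with b i = a, f b (Function.update b i a') := by
  have update_self_of_mem {t : α i} {b : ∀ j, α j} (hb : b ∈ ({b | b i = t} : Finset _)) :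
      Function.update b i t = b :=
    Function.update_eq_iff.2 ⟨((mem_filter_univ b).1 hb).symm, fun _ _ => rfl⟩
  refine sum_nbij' (Function.update · i a) (Function.update · i a') (fun _ _ => by simp)
    (fun _ _ => by simp) (fun b hb => ?_) (fun b hb => ?_) (fun b hb => ?_) <;>
    simp only [Function.update_idem, update_self_of_mem hb]

section Deviation

variable [∀ i, Fintype (B i)] [∀ i, DecidableEq (B i)]
  [∀ i, Fintype (S i)] [∀ i, DecidableEq (S i)] [Fintype Θ]

theorem fLP_nonneg {i : Fin n} {x ζ : (∀ j, B j) → (∀ j, S j) → Θ → ℝ}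
    (hx : ∀ b s θ, 0 ≤ x b s θ) (hζ : ∀ b s θ, 0 ≤ ζ b s θ) (bi bi' : B i) (si si' : S i) :
    0 ≤ fLP i x bi bi' si si' ζ := by
  refine sum_nonneg fun b _ => sum_nonneg fun s _ => sum_nonneg fun θ _ => ?_
  split_ifs
  exacts [mul_nonneg (hx _ _ _) (hζ _ _ _), le_rfl]

theorem fLP_eq_sum_filter (i : Fin n) (x ζ : (∀ j, B j) → (∀ j, S j) → Θ → ℝ)
    (bi bi' : B i) (si si' : S i) :
    fLP i x bi bi' si si' ζ = ∑ b with b i = bi, ∑ s with s i = si, ∑ θ,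
      x b (Function.update s i si') θ * ζ (Function.update b i bi') s θ := by
  rw [← sum_filter_update i bi bi' fun b b' => ∑ s with s i = si, ∑ θ,
    x b (Function.update s i si') θ * ζ b' s θ]
  simp only [fLP, ite_and, sum_filter, sum_ite_irrel, sum_const_zero]

theorem FpayDev_eq_sum_fLP (P : (∀ j, B j) → (∀ j, S j) → Θ → ℝ) (μ : (∀ j, B j) → ℝ)
    (γ : Fin n → (∀ j, B j) → (∀ j, S j) → Θ → ℝ) (i : Fin n)
    (φ : B i → B i) (ψ : B i → S i → S i) :
    FpayDev P μ γ i φ ψ =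
      ∑ bi, ∑ si, fLP i (weightedPayment μ γ i) bi (φ bi) si (ψ bi si) P := by
  have fiber (bi : B i) : ∑ si, fLP i (weightedPayment μ γ i) bi (φ bi) si (ψ bi si) P =
      ∑ b with b i = bi, ∑ s, ∑ θ, μ b * P (Function.update b i (φ (b i))) s θ *
        γ i b (Function.update s i (ψ (b i) (s i))) θ := by
    simp only [fLP_eq_sum_filter]
    rw [sum_comm]
    refine sum_congr rfl fun b hb => ?_
    obtain rfl : b i = bi := by simpa using hb
    rw [← sum_fiberwise univ (fun s : ∀ j, S j => s i)]
    refine sum_congr rfl fun si _ => sum_congr rfl fun s hs => ?_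
    obtain rfl : s i = si := by simpa using hs
    simp only [weightedPayment, mul_right_comm]
  simp only [fiber, sum_fiberwise, FpayDev]

theorem Fpay_eq_sum_fLP (P : (∀ j, B j) → (∀ j, S j) → Θ → ℝ) (μ : (∀ j, B j) → ℝ)
    (γ : Fin n → (∀ j, B j) → (∀ j, S j) → Θ → ℝ) (i : Fin n) :
    Fpay P μ γ i = ∑ bi, ∑ si, fLP i (weightedPayment μ γ i) bi bi si si P := by
  rw [← FpayDev_id, FpayDev_eq_sum_fLP]
  rfl

theorem IC.sum_cost_le_sum_fLP_sub {c : ∀ i, B i → ℝ} {P : (∀ j, B j) → (∀ j, S j) → Θ → ℝ}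
    {μ : (∀ j, B j) → ℝ} {γ : Fin n → (∀ j, B j) → (∀ j, S j) → Θ → ℝ} (hIC : IC c P μ γ)
    (i : Fin n) (bi bi' : B i) (g : S i → S i) :
    ∑ b, (if b i = bi then μ b * (c i bi - c i bi') else 0) ≤
      ∑ si, (fLP i (weightedPayment μ γ i) bi bi si si P -
        fLP i (weightedPayment μ γ i) bi bi' si (g si) P) := by
  -- Deviate only after the recommendation `bi`, so that no other recommendation contributes.
  let φ : B i → B i := Function.update id bi bi'
  let ψ : B i → S i → S i := Function.update (fun _ => id) bi g
  have cost : ∑ b, μ b * (c i (b i) - c i (φ (b i))) =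
      ∑ b, if b i = bi then μ b * (c i bi - c i bi') else 0 := by
    refine sum_congr rfl fun b _ => ?_
    split_ifs with hb <;> simp [φ, hb]
  have payment : Fpay P μ γ i - FpayDev P μ γ i φ ψ =
      ∑ si, (fLP i (weightedPayment μ γ i) bi bi si si P -
        fLP i (weightedPayment μ γ i) bi bi' si (g si) P) := by
    simp only [Fpay_eq_sum_fLP, FpayDev_eq_sum_fLP, ← sum_sub_distrib]
    rw [Fintype.sum_eq_single bi fun a ha => by simp [φ, ψ, ha]]
    simp only [φ, ψ, Function.update_self]
  exact cost ▸ payment ▸ hIC i φ ψ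

variable [∀ i, Nonempty (S i)]

theorem fLP_le_maxDeviationPayment (ζ : (∀ j, B j) → (∀ j, S j) → Θ → ℝ)
    (x : Fin n → (∀ j, B j) → (∀ j, S j) → Θ → ℝ) (i : Fin n) (bi bi' : B i) (si si' : S i) :
    fLP i (x i) bi bi' si si' ζ ≤ maxDeviationPayment ζ x i bi bi' si :=
  le_sup' (fun t => fLP i (x i) bi bi' si t ζ) (mem_univ si')

theorem exists_maxDeviationPayment_eq_fLP (ζ : (∀ j, B j) → (∀ j, S j) → Θ → ℝ)
    (x : Fin n → (∀ j, B j) → (∀ j, S j) → Θ → ℝ) (i : Fin n) (bi bi' : B i) :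
    ∃ g : S i → S i, ∀ si,
      maxDeviationPayment ζ x i bi bi' si = fLP i (x i) bi bi' si (g si) ζ := by
  choose g _ hg using fun si => exists_mem_eq_sup' univ_nonempty
    fun t => fLP i (x i) bi bi' si t ζ
  exact ⟨g, hg⟩

theorem IC.sum_cost_le_sum_fLP_sub_maxDeviationPayment {c : ∀ i, B i → ℝ}
    {P : (∀ j, B j) → (∀ j, S j) → Θ → ℝ} {μ : (∀ j, B j) → ℝ}
    {γ : Fin n → (∀ j, B j) → (∀ j, S j) → Θ → ℝ} (hIC : IC c P μ γ)
    (i : Fin n) (bi bi' : B i) :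
    ∑ b, (if b i = bi then μ b * (c i bi - c i bi') else 0) ≤
      ∑ si, (fLP i (weightedPayment μ γ i) bi bi si si P -
        maxDeviationPayment P (weightedPayment μ γ) i bi bi' si) := by
  obtain ⟨g, hg⟩ := exists_maxDeviationPayment_eq_fLP P (weightedPayment μ γ) i bi bi'
  simpa only [hg] using hIC.sum_cost_le_sum_fLP_sub i bi bi' g

theorem IC_mechanism_gives_LP_feasible_point_general [Fintype A]
    {c : ∀ i, B i → ℝ} {P : (∀ j, B j) → (∀ j, S j) → Θ → ℝ} (u : A → Θ → ℝ) {M : ℝ}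
    (hP : ∀ b s θ, 0 ≤ P b s θ) {μ : (∀ j, B j) → ℝ}
    {γ : Fin n → (∀ j, B j) → (∀ j, S j) → Θ → ℝ} {π : (∀ j, B j) → (∀ j, S j) → A → ℝ}
    (hmech : IsMech M μ γ π) (hIC : IC c P μ γ) :
    LPfeasible M P (fun i bi bi' => c i bi - c i bi') 0 (weightedPayment μ γ)
        (weightedDecision μ π) (maxDeviationPayment P (weightedPayment μ γ)) μ ∧
      LPobj u P (weightedPayment μ γ) (weightedDecision μ π) = Util P u μ γ π := by
  obtain ⟨hμ, hμ_sum, hγ, hπ, hπ_sum⟩ := hmech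
  have x_nonneg (i b s θ) : 0 ≤ weightedPayment μ γ i b s θ := mul_nonneg (hμ b) (hγ i b s θ).1
  have fLP_le := fLP_le_maxDeviationPayment P (weightedPayment μ γ)
  have z_nonneg (i) (bi bi' : B i) (si) :
      0 ≤ maxDeviationPayment P (weightedPayment μ γ) i bi bi' si :=
    (fLP_nonneg (x_nonneg i) hP bi bi' si si).trans (fLP_le i bi bi' si si)
  have sum_y (b s) : ∑ a, weightedDecision μ π b s a = μ b := by
    simp only [weightedDecision, ← mul_sum, hπ_sum, mul_one]
  have x_le (i b s θ) : weightedPayment μ γ i b s θ ≤ M * μ b := by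
    rw [mul_comm M]
    exact mul_le_mul_of_nonneg_left (hγ i b s θ).2 (hμ b)
  refine ⟨⟨x_nonneg, fun b s a => mul_nonneg (hμ b) (hπ b s a), z_nonneg, hμ, hμ_sum,
    by simpa only [sub_zero] using hIC.sum_cost_le_sum_fLP_sub_maxDeviationPayment,
    fLP_le, sum_y, x_le⟩, LPobj_weighted_eq_Util P u μ γ π⟩

end Deviation

/-- every incentive compatible correlated mechanism induces a feasible
solution of `LP(P, C, 0)` with objective value equal to the principal's utility. -/
theorem IC_mechanism_gives_LP_feasible_point
    [∀ i, Fintype (B i)] [∀ i, DecidableEq (B i)]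
    [∀ i, Fintype (S i)] [∀ i, DecidableEq (S i)] [∀ i, Nonempty (S i)]
    [Fintype Θ] [Fintype A]
    (p : Θ → ℝ) (c : ∀ i, B i → ℝ)
    (P : (∀ i, B i) → (∀ i, S i) → Θ → ℝ)
    (u : A → Θ → ℝ) (M : ℝ) (hM : 0 < M)
    (hc : ∀ i bi, c i bi ∈ Set.Icc (0:ℝ) 1)
    (hu : ∀ a θ, u a θ ∈ Set.Icc (0:ℝ) 1)
    (hp0 : ∀ θ, 0 ≤ p θ) (hp1 : (∑ θ, p θ) = 1)
    (hP0 : ∀ b s θ, 0 ≤ P b s θ)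
    (hPp : ∀ b θ, (∑ s, P b s θ) = p θ)
    (hmarg : ∀ (i : Fin n) (b b' : ∀ j, B j), b i = b' i →
      ∀ (si : S i) (θ : Θ),
        (∑ s, if s i = si then P b s θ else 0) =
        (∑ s, if s i = si then P b' s θ else 0))
    (μ : (∀ j, B j) → ℝ)
    (γ : Fin n → (∀ j, B j) → (∀ j, S j) → Θ → ℝ)
    (π : (∀ j, B j) → (∀ j, S j) → A → ℝ)
    (hmech : IsMech M μ γ π) (hIC : IC c P μ γ) :
    LPfeasible M P (fun i bi bi' => c i bi - c i bi') 0
        (fun i b s θ => μ b * γ i b s θ)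
        (fun b s a => μ b * π b s a)
        (fun i bi bi' si => Finset.univ.sup' Finset.univ_nonempty
          (fun si' : S i => fLP i (fun b s θ => μ b * γ i b s θ) bi bi' si si' P))
        μ ∧
    LPobj u P (fun i b s θ => μ b * γ i b s θ) (fun b s a => μ b * π b s a) =
      Util P u μ γ π :=
  IC_mechanism_gives_LP_feasible_point_general u hP0 hmech hIC
end
end

section
/- Let Θ be a finite set with m := |Θ| ≥ 1, let q, ξ, ξ' ∈ Δ(Θ) and ϱ ≥ 0 with |q[θ] − ξ[θ]| ≤ ϱ for all θ ∈ Θ, and suppose ||ξ − ξ'||₂² ≥ 13·m·ϱ. For any constant H ∈ ℝ define ĝ[θ] := ξ[θ] + H − (1/2)·||ξ||₂² and ĝ'[θ] := ξ'[θ] + H − (1/2)·||ξ'||₂². Then Σ_θ q[θ]·(ĝ[θ] − ĝ'[θ]) ≥ (9/26)·||ξ − ξ'||₂²; in particular the quadratic scoring rule strictly incentivizes reporting the signal whose estimated posterior is ξ. -/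
open Finset

/-!
With `d = ξ - ξ'`, completing the square shows that the expected gain from reporting `ξ` rather
than `ξ'` under a belief `q` of total mass one is exactly `‖d‖₂² / 2 + ⟨q - ξ, d⟩`. If `q` is within
`ϱ` of `ξ` coordinatewise, Hölder's inequality bounds the last term below by `-ϱ ‖d‖₁`, so the
margin `9/26 = 1/2 - 2/13` survives as soon as `ϱ ‖d‖₁ ≤ (2/13) ‖d‖₂²`. Two probability vectors are
at `ℓ¹`-distance at most `2`, so `‖d‖₂² ≥ 13 ϱ` already suffices.
-/

section Sums

variable {ι α : Type*} {s : Finset ι} {f g : ι → α}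

theorem sum_abs_sub_le_sum_add_sum [AddCommGroup α] [LinearOrder α] [IsOrderedAddMonoid α]
    (hf : ∀ i ∈ s, 0 ≤ f i) (hg : ∀ i ∈ s, 0 ≤ g i) :
    ∑ i ∈ s, |f i - g i| ≤ ∑ i ∈ s, f i + ∑ i ∈ s, g i := by
  rw [← sum_add_distrib]
  refine sum_le_sum fun i hi ↦ ?_
  simpa only [abs_of_nonneg (hf i hi), abs_of_nonneg (hg i hi)] using abs_sub (f i) (g i)

theorem abs_sum_mul_le_mul_sum_abs [Ring α] [LinearOrder α] [IsOrderedRing α] {c : α}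
    (hf : ∀ i ∈ s, |f i| ≤ c) :
    |∑ i ∈ s, f i * g i| ≤ c * ∑ i ∈ s, |g i| :=
  calc |∑ i ∈ s, f i * g i|
      ≤ ∑ i ∈ s, |f i * g i| := abs_sum_le_sum_abs _ _
    _ = ∑ i ∈ s, |f i| * |g i| := by simp only [abs_mul]
    _ ≤ ∑ i ∈ s, c * |g i| :=
      sum_le_sum fun i hi ↦ mul_le_mul_of_nonneg_right (hf i hi) (abs_nonneg _)
    _ = c * ∑ i ∈ s, |g i| := (mul_sum _ _ _).symm

end Sums

section QuadraticScore

variable {Θ 𝕜 : Type*} [Fintype Θ] [Field 𝕜]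

/-- The quadratic scoring rule with offset `H`: the payment `ĝ[θ]` for reporting the belief `ξ` when
the realized state is `θ`. The report may be any vector, not only a probability vector. -/
def quadraticScore (H : 𝕜) (ξ : Θ → 𝕜) (θ : Θ) : 𝕜 :=
  ξ θ + H - (1 / 2) * ∑ θ', (ξ θ') ^ 2

theorem sum_mul_quadraticScore_sub [NeZero (2 : 𝕜)] {q : Θ → 𝕜} (hq : ∑ θ, q θ = 1)
    (H : 𝕜) (ξ ξ' : Θ → 𝕜) :
    ∑ θ, q θ * (quadraticScore H ξ θ - quadraticScore H ξ' θ) =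
      (1 / 2) * ∑ θ, (ξ θ - ξ' θ) ^ 2 + ∑ θ, (q θ - ξ θ) * (ξ θ - ξ' θ) :=
  calc ∑ θ, q θ * (quadraticScore H ξ θ - quadraticScore H ξ' θ)
      = ∑ θ, (q θ * (ξ θ - ξ' θ) +
          q θ * ((1 / 2) * (∑ θ', (ξ' θ') ^ 2 - ∑ θ', (ξ θ') ^ 2))) :=
        sum_congr rfl fun θ _ ↦ by unfold quadraticScore; ring
    _ = ∑ θ, q θ * (ξ θ - ξ' θ) + (1 / 2) * (∑ θ, (ξ' θ) ^ 2 - ∑ θ, (ξ θ) ^ 2) := by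
        rw [sum_add_distrib, ← sum_mul, hq, one_mul]
    _ = ∑ θ, (q θ * (ξ θ - ξ' θ) + (1 / 2) * ((ξ' θ) ^ 2 - (ξ θ) ^ 2)) := by
        rw [← sum_sub_distrib, mul_sum, ← sum_add_distrib]
    _ = ∑ θ, ((1 / 2) * (ξ θ - ξ' θ) ^ 2 + (q θ - ξ θ) * (ξ θ - ξ' θ)) :=
        sum_congr rfl fun θ _ ↦ by field_simp; ring
    _ = (1 / 2) * ∑ θ, (ξ θ - ξ' θ) ^ 2 + ∑ θ, (q θ - ξ θ) * (ξ θ - ξ' θ) := by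
        rw [sum_add_distrib, mul_sum]

variable [LinearOrder 𝕜] [IsStrictOrderedRing 𝕜]

theorem half_sum_sq_sub_le_sum_mul_quadraticScore_sub
    {q ξ : Θ → 𝕜} {ϱ : 𝕜} (hq : ∑ θ, q θ = 1) (hclose : ∀ θ, |q θ - ξ θ| ≤ ϱ)
    (ξ' : Θ → 𝕜) (H : 𝕜) :
    (1 / 2) * ∑ θ, (ξ θ - ξ' θ) ^ 2 - ϱ * ∑ θ, |ξ θ - ξ' θ| ≤
      ∑ θ, q θ * (quadraticScore H ξ θ - quadraticScore H ξ' θ) := by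
  have herror : |∑ θ, (q θ - ξ θ) * (ξ θ - ξ' θ)| ≤ ϱ * ∑ θ, |ξ θ - ξ' θ| :=
    abs_sum_mul_le_mul_sum_abs fun θ _ ↦ hclose θ
  rw [sum_mul_quadraticScore_sub hq]
  linarith [neg_le_of_abs_le herror]

theorem quadratic_scoring_strict_incentive_general
    {q ξ ξ' : Θ → 𝕜} {ϱ : 𝕜} (hq : ∑ θ, q θ = 1) (hclose : ∀ θ, |q θ - ξ θ| ≤ ϱ)
    (hsep : (13 / 2) * (ϱ * ∑ θ, |ξ θ - ξ' θ|) ≤ ∑ θ, (ξ θ - ξ' θ) ^ 2) (H : 𝕜) :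
    (9 / 26) * ∑ θ, (ξ θ - ξ' θ) ^ 2 ≤
      ∑ θ, q θ * (quadraticScore H ξ θ - quadraticScore H ξ' θ) := by
  linarith [half_sum_sq_sub_le_sum_mul_quadraticScore_sub hq hclose ξ' H]

end QuadraticScore

/-- if the estimated posteriors are well separated
(`‖ξ − ξ'‖₂² ≥ 13·m·ϱ`), the quadratic scoring rule strictly incentivizes reporting
the signal with estimated posterior `ξ`, with margin `(9/26)·‖ξ − ξ'‖₂²`. -/
theorem quadratic_scoring_strict_incentive
    {Θ : Type*} [Fintype Θ]
    (hm : 1 ≤ Fintype.card Θ)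
    (q ξ ξ' : Θ → ℝ)
    (hq0 : ∀ θ, 0 ≤ q θ) (hq1 : (∑ θ, q θ) = 1)
    (hξ0 : ∀ θ, 0 ≤ ξ θ) (hξ1 : (∑ θ, ξ θ) = 1)
    (hξ'0 : ∀ θ, 0 ≤ ξ' θ) (hξ'1 : (∑ θ, ξ' θ) = 1)
    (ϱ : ℝ) (hϱ0 : 0 ≤ ϱ)
    (hclose : ∀ θ, |q θ - ξ θ| ≤ ϱ)
    (hsep : (∑ θ, (ξ θ - ξ' θ)^2) ≥ 13 * (Fintype.card Θ) * ϱ)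
    (H : ℝ) :
    ∑ θ, q θ *
        ((ξ θ + H - (1/2) * ∑ θ', (ξ θ')^2) - (ξ' θ + H - (1/2) * ∑ θ', (ξ' θ')^2)) ≥
      (9/26) * ∑ θ, (ξ θ - ξ' θ)^2 := by
  have hdist : ∑ θ, |ξ θ - ξ' θ| ≤ 2 := by
    linarith [sum_abs_sub_le_sum_add_sum (s := univ) (fun θ _ ↦ hξ0 θ) (fun θ _ ↦ hξ'0 θ)]
  have hdist_mul : ϱ * ∑ θ, |ξ θ - ξ' θ| ≤ ϱ * 2 := mul_le_mul_of_nonneg_left hdist hϱ0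
  have hcard : ϱ ≤ Fintype.card Θ * ϱ := le_mul_of_one_le_left hϱ0 (mod_cast hm)
  exact quadratic_scoring_strict_incentive_general hq1 hclose (by linarith) H
end
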